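/- For every integer n ≥ 1, one has P_n/P_{n−1} > 24(3n^2 − 3n + 1)/(5n^2). -/

import Mathlib

/-!
Write `A n = 3 n ^ 2 - 3 n + 1`; the claim is `24 A n P (n-1) < 5 n ^ 2 P n`. By the recurrence,
the claim at `n + 1` amounts to `40 n ^ 2 P (n-1) < A (n+1) P n`. Given the claim at `n`, this
follows from `200 n ^ 4 ≤ 24 A n A (n+1) = 24 (9 n ^ 4 - 3 n ^ 2 + 1)`, which holds for `n ≥ 3`.
So induction starts at `n = 3`, and `n = 1, 2, 3` are checked with
`P 1 = 8`, `P 2 = 80`, `P 3 = 896`.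
-/

/-- The inductive step: `p, q, r` are `P (n-1), P n, P (n+1)` with `n = x`, and the factor
`3 x ^ 2 + 3 x + 1` is `A (n+1)`. -/
lemma clf_step (x p q r : ℝ) (hx : 3 ≤ x) (hp : 0 < p)
    (h : 24 * (3 * x ^ 2 - 3 * x + 1) * p < 5 * x ^ 2 * q)
    (hr : (x + 1) ^ 2 * r = 8 * (3 * x ^ 2 + 3 * x + 1) * q - 128 * x ^ 2 * p) :
    24 * (3 * x ^ 2 + 3 * x + 1) * q < 5 * (x + 1) ^ 2 * r := by
  have hA : 0 < 3 * x ^ 2 + 3 * x + 1 := by positivity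
  have h1 := mul_lt_mul_of_pos_left h hA
  have h2 : 0 ≤ 16 * x ^ 4 - 72 * x ^ 2 + 24 := by
    nlinarith [mul_nonneg (sq_nonneg x) (show 0 ≤ x ^ 2 - 9 by nlinarith), sq_nonneg x]
  have h3 := mul_nonneg h2 hp.le
  have h4 : 5 * x ^ 2 * (40 * x ^ 2 * p) < 5 * x ^ 2 * ((3 * x ^ 2 + 3 * x + 1) * q) := by
    linarith
  have h5 := lt_of_mul_lt_mul_left h4 (by positivity)
  linarith

/-- For the Catalan-Larcombe-French sequence, `P_n/P_{n-1} > 24(3n^2-3n+1)/(5n^2)`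
for all `n ≥ 1`. -/
theorem stmt_13 (P : ℕ → ℝ) (hP0 : P 0 = 1) (hP1 : P 1 = 8)
    (hrec : ∀ n : ℕ, 2 ≤ n →
      (n : ℝ) ^ 2 * P n =
        8 * (3 * (n : ℝ) ^ 2 - 3 * (n : ℝ) + 1) * P (n - 1)
          - 128 * ((n : ℝ) - 1) ^ 2 * P (n - 2)) :
    ∀ n : ℕ, 1 ≤ n →
      24 * (3 * (n : ℝ) ^ 2 - 3 * (n : ℝ) + 1) / (5 * (n : ℝ) ^ 2) < P n / P (n - 1) := by
  have hP2 : P 2 = 80 := by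
    have h := hrec 2 le_rfl
    norm_num [hP0, hP1] at h
    linarith
  have hP3 : P 3 = 896 := by
    have h := hrec 3 (by norm_num)
    norm_num [hP1, hP2] at h
    linarith
  have key : ∀ n : ℕ, 3 ≤ n → 0 < P (n - 1) ∧
      24 * (3 * (n : ℝ) ^ 2 - 3 * n + 1) * P (n - 1) < 5 * (n : ℝ) ^ 2 * P n := by
    intro n hn
    induction n, hn using Nat.le_induction with
    | base => norm_num [hP2, hP3]
    | succ n hn ih =>
      obtain ⟨hp, h⟩ := ih
      have hx : (3 : ℝ) ≤ n := by exact_mod_cast hn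
      have hr := hrec (n + 1) (by omega)
      rw [show n + 1 - 2 = n - 1 by omega, Nat.add_sub_cancel] at hr
      push_cast at hr
      rw [Nat.add_sub_cancel]
      constructor
      · have hB : 0 < 24 * (3 * (n : ℝ) ^ 2 - 3 * n + 1) := by nlinarith
        exact pos_of_mul_pos_right ((mul_pos hB hp).trans h) (by positivity)
      · have := clf_step n _ _ (P (n + 1)) hx hp h (by linear_combination hr)
        push_cast
        linear_combination this
  intro n hn
  obtain rfl | rfl | h3 : n = 1 ∨ n = 2 ∨ 3 ≤ n := by omega
  · norm_num [hP0, hP1]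
  · norm_num [hP1, hP2]
  · obtain ⟨hp, h⟩ := key n h3
    have hx : (0 : ℝ) < n := by exact_mod_cast hn
    rw [div_lt_div_iff₀ (by positivity) hp]
    linarith
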